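/- arXiv:math/0103129 — 2 statements merged into one kernel-verified Lean document; each statement's English description precedes it below -/
import Mathlib

section
/- Let A be a unital *-algebra carrying an F-valued probability space structure (F ⊆ A, E) and a scalar probability space structure (A, φ) which are compatible; suppose a ∈ A is R-diagonal with amalgamation over F and that {aa*} and F are free with respect to φ. Let B be the unital subalgebra generated by aa*, B₀ = {x ∈ B : φ(x) = 0}, F₀ = {x ∈ F : φ(x) = 0}, and define Q₁₁ = span{(a*B), (a*B)F₀B₀, (a*B)F₀B₀F₀B₀, …}, Q₁₂ = {x ∈ span{F, a*Ba, a*BFBa, a*BFBFBa, …} : φ(x) = 0}, Q₂₁ = span{B₀, B₀F₀B₀, B₀F₀B₀F₀B₀, …}, Q₂₂ = span{(Ba), B₀F₀(Ba), B₀F₀B₀F₀(Ba), …}. Then for all n ≥ 1, all i₁, …, i_{n+1} ∈ {1, 2}, and all x₁ ∈ Q_{i₁ i₂}, x₂ ∈ Q_{i₂ i₃}, …, xₙ ∈ Q_{iₙ i_{n+1}} one has φ(x₁ x₂ ⋯ xₙ) = 0; if moreover (i₁, i_{n+1}) ≠ (1, 2), then E(x₁ x₂ ⋯ xₙ) = 0.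 -/
/-!
Write `B` for the algebra generated by `a a*`, and `B₀`, `F₀` for the `φ`-centred parts of `B`
and `F`.

Every `Q`-set other than `Q₁₂` is contained in the corresponding `P`-set of `a`. This is clear up
to the condition `E x = 0` on `Q₂₁`, for which freeness is used: for `x` in `B₀F₀⋯B₀` one has
`φ (f x) = 0` for all `f ∈ F`, and `f = (E x)*` together with faithfulness gives `E x = 0`
(`condExp_eq_zero_of_mem_Q10`). An element `x` of `Q₁₂` splits as `(x - E x) + E x`, where
`x - E x ∈ P₁₂` and `E x ∈ F₀` (`Qset_split`).

Expanding a product `x₁ ⋯ xₙ` accordingly, the term containing no factor of `F₀` vanishes under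
`E` by `R`-diagonality. A factor `f ∈ F₀` at one end of the product leaves `E` by the bimodule
property, and the remaining shorter product is not of type `(1, 2)`, so `E` kills it by induction.
A factor `f ∈ F₀` in the interior is absorbed by its neighbours, since
`Q_{i1} F₀ Q_{2k} ⊆ Q_{ik}` (`Qset_merge`); this again shortens the product. In the case
`i = 1`, `k = 2` the inclusion needs `φ (y f z) = 0`, which follows from traciality and freeness.
Hence induction on `n` applies.
-/

noncomputable section

variable {A : Type*}

section Scaffold
variable [Ring A] [Algebra ℂ A] [StarRing A] [StarModule ℂ A]

/-- A faithful tracial state on a unital complex `⋆`-algebra. -/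
structure IsFaithfulTracialState (φ : A →ₗ[ℂ] ℂ) : Prop where
  unital : φ 1 = 1
  positive : ∀ a : A, 0 ≤ (φ (star a * a)).re ∧ (φ (star a * a)).im = 0
  tracial : ∀ a b : A, φ (a * b) = φ (b * a)
  faithful : ∀ a : A, φ (star a * a) = 0 → a = 0

/-- `E` is a conditional expectation onto the subalgebra with underlying set `D`. -/
def IsCondExp (D : Set A) (E : A →ₗ[ℂ] A) : Prop :=
  E 1 = 1 ∧ (∀ x : A, E x ∈ D) ∧
    ∀ d₁ ∈ D, ∀ d₂ ∈ D, ∀ x : A, E (d₁ * x * d₂) = d₁ * E x * d₂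

/-- `letter a true = a`, `letter a false = star a`. -/
def letter (a : A) : Bool → A := fun b => if b then a else star a

/-- Words `d₀ · a^{s₁} · d₁ · a^{s₂} · ⋯ · a^{sₖ} · dₖ` with the `dᵢ` running over `D`
and the pattern of letters (`true` for `a`, `false` for `star a`) given by the list. -/
def wordSet (D : Set A) (a : A) : List Bool → Set A
  | [] => D
  | b :: rest => {x | ∃ d ∈ D, ∃ w ∈ wordSet D a rest, x = d * letter a b * w}

/-- The alternating list of length `n` starting with `b`. -/
def altList : Bool → ℕ → List Bool
  | _, 0 => []
  | b, n + 1 => b :: altList (!b) n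

/-- The sets `P₁₁, P₁₂, P₂₁, P₂₂` associated to `a` (indices `0,1` standing for `1,2`). -/
def Pset (D : Set A) (E : A →ₗ[ℂ] A) (a : A) : Fin 2 → Fin 2 → Set A :=
  ![![↑(Submodule.span ℂ (⋃ m : ℕ, wordSet D a (altList false (2 * m + 1)))),
     {x | x ∈ Submodule.span ℂ (⋃ m : ℕ, wordSet D a (altList false (2 * m))) ∧ E x = 0}],
    ![{x | x ∈ Submodule.span ℂ (⋃ m : ℕ, wordSet D a (altList true (2 * m))) ∧ E x = 0},
     ↑(Submodule.span ℂ (⋃ m : ℕ, wordSet D a (altList true (2 * m + 1))))]]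

/-- `a` is `R`-diagonal with amalgamation over `D` (w.r.t. the conditional expectation `E`). -/
def RDiagWithAmalg (D : Set A) (E : A →ₗ[ℂ] A) (a : A) : Prop :=
  ∀ n : ℕ, 0 < n → ∀ (i : Fin (n + 1) → Fin 2) (x : Fin n → A),
    (∀ k : Fin n, x k ∈ Pset D E a (i k.castSucc) (i k.succ)) →
    E (List.ofFn x).prod = 0

/-- `x` and `y` are identically `D`-distributed:
`E(x^{s₁} d₁ x^{s₂} d₂ ⋯ d_{n−1} x^{sₙ}) = E(y^{s₁} d₁ ⋯ d_{n−1} y^{sₙ})`. -/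
def IdentDistrib (D : Set A) (E : A →ₗ[ℂ] A) (x y : A) : Prop :=
  ∀ n : ℕ, 0 < n → ∀ (s : Fin n → Bool) (d : Fin n → A), (∀ i, d i ∈ D) →
    E (List.ofFn fun i : Fin n =>
        letter x (s i) * (if i.val + 1 < n then d i else 1)).prod =
    E (List.ofFn fun i : Fin n =>
        letter y (s i) * (if i.val + 1 < n then d i else 1)).prod

/-- A family of subsets of `A` is free with amalgamation over `D`. -/
def FreeAmalg (D : Set A) (E : A →ₗ[ℂ] A) {ι : Type*} (X : ι → Set A) : Prop :=
  ∀ n : ℕ, 0 < n → ∀ (s : Fin n → ι) (x : Fin n → A),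
    (∀ k : Fin n, x k ∈ Algebra.adjoin ℂ (X (s k) ∪ D)) →
    (∀ (k : Fin n) (h : k.val + 1 < n), s k ≠ s ⟨k.val + 1, h⟩) →
    (∀ k : Fin n, E (x k) = 0) →
    E (List.ofFn x).prod = 0

/-- A scalar random variable: normal, commutes with `D`, with scalar `D`-moments. -/
def IsScalarRV (D : Set A) (E : A →ₗ[ℂ] A) (y : A) : Prop :=
  y * star y = star y * y ∧
  (∀ d ∈ D, d * y = y * d ∧ d * star y = star y * d) ∧
  ∀ k l : ℕ, ∃ c : ℂ, E (y ^ k * (star y) ^ l) = algebraMap ℂ A c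

end Scaffold

/-- The scalars `ℂ·1` inside `A`. -/
def scalarD (A : Type*) [Ring A] [Algebra ℂ A] : Set A := Set.range (algebraMap ℂ A)

section Scaffold2
variable [Ring A] [Algebra ℂ A] [StarRing A] [StarModule ℂ A]

/-- The conditional expectation `x ↦ φ(x)·1` associated to a state `φ`. -/
def scalarE (φ : A →ₗ[ℂ] ℂ) : A →ₗ[ℂ] A := (Algebra.linearMap ℂ A).comp φ

/-- `a` is (scalar) `R`-diagonal with respect to `φ`. -/
def RDiag (φ : A →ₗ[ℂ] ℂ) (a : A) : Prop :=
  RDiagWithAmalg (scalarD A) (scalarE φ) a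

/-- A family of subsets of `A` is free with respect to the state `φ`. -/
def FreeScalar (φ : A →ₗ[ℂ] ℂ) {ι : Type*} (X : ι → Set A) : Prop :=
  FreeAmalg (scalarD A) (scalarE φ) X

/-- `a^1 = a`, `a^{-1} = star a`. -/
def sgnPow (a : A) (t : ℤ) : A := if t = 1 then a else star a

/-- The set of balanced words in `a, star a`. -/
def balancedWords (a : A) : Set A :=
  {w | ∃ (n : ℕ) (_ : 0 < n) (t : Fin n → ℤ),
    (∀ i, t i = 1 ∨ t i = -1) ∧
    (∑ i, t i) = 0 ∧
    (∀ j : ℕ, 0 < j → j < n →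
      (∑ i ∈ Finset.univ.filter (fun i : Fin n => i.val < j), t i) ≤ 0) ∧
    w = (List.ofFn fun i : Fin n => sgnPow a (t i)).prod}

/-- The algebra `K_a`: the span of balanced words. -/
def Kset (a : A) : Set A := ↑(Submodule.span ℂ (balancedWords a))

end Scaffold2

end
open Pointwise

noncomputable section

variable {A : Type*} [Ring A] [Algebra ℂ A] [StarRing A] [StarModule ℂ A]

/-- Words `W · (S·T)^k` (set products, `k` factors of `S·T` appended on the right). -/
def tailRep (S T W : Set A) : ℕ → Set A
  | 0 => W
  | k + 1 => tailRep S T W k * (S * T)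

/-- Words `(S·T)^k · W` (set products, `k` factors of `S·T` prepended on the left). -/
def headRep (S T W : Set A) : ℕ → Set A
  | 0 => W
  | k + 1 => S * (T * headRep S T W k)

/-- The sets `Q₁₁, Q₁₂, Q₂₁, Q₂₂` from Statement 6, built from the unital subalgebra `B`
generated by `a a*`, its trace-zero part `B₀`, and the trace-zero part `F₀` of `F`. -/
def Qset (φ : A →ₗ[ℂ] ℂ) (F : Set A) (a : A) : Fin 2 → Fin 2 → Set A :=
  let B : Set A := ↑(Algebra.adjoin ℂ ({a * star a} : Set A))
  let B₀ : Set A := {x ∈ B | φ x = 0}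
  let F₀ : Set A := {x ∈ F | φ x = 0}
  ![![↑(Submodule.span ℂ (⋃ k : ℕ, tailRep F₀ B₀ ({star a} * B) k)),
     {x | x ∈ Submodule.span ℂ
        (F ∪ ⋃ k : ℕ, {star a} * tailRep F B B k * {a}) ∧ φ x = 0}],
    ![↑(Submodule.span ℂ (⋃ k : ℕ, tailRep F₀ B₀ B₀ k)),
     ↑(Submodule.span ℂ (⋃ k : ℕ, headRep B₀ F₀ (B * {a}) k))]]

set_option linter.unusedSectionVars false

/-! ### Products along paths -/

/-- `IsPath Q i j l`: the list `l = [x₁, …, xₙ]` satisfies `x₁ ∈ Q i i₂`, `x₂ ∈ Q i₂ i₃`, …,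
`xₙ ∈ Q iₙ j` for some indices `i₂, …, iₙ`. -/
def IsPath (Q : Fin 2 → Fin 2 → Set A) : Fin 2 → Fin 2 → List A → Prop
  | i, j, [] => i = j
  | i, j, x :: l => ∃ k, x ∈ Q i k ∧ IsPath Q k j l

theorem IsPath.mono {Q R : Fin 2 → Fin 2 → Set A} (h : ∀ i j, Q i j ⊆ R i j) {l : List A} :
    ∀ {i j : Fin 2}, IsPath Q i j l → IsPath R i j l := by
  induction l with
  | nil => intro i j hl; exact hl
  | cons x l ih =>
    rintro i j ⟨k, hx, hl⟩
    exact ⟨k, h _ _ hx, ih hl⟩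

theorem isPath_append {Q : Fin 2 → Fin 2 → Set A} {l l' : List A} :
    ∀ {i j : Fin 2}, IsPath Q i j (l ++ l') ↔ ∃ k, IsPath Q i k l ∧ IsPath Q k j l' := by
  induction l with
  | nil => intro i j; simp [IsPath]
  | cons x l ih =>
    intro i j
    simp only [List.cons_append, IsPath, ih]
    constructor
    · rintro ⟨k, hx, m, h1, h2⟩; exact ⟨m, ⟨k, hx, h1⟩, h2⟩
    · rintro ⟨m, ⟨k, hx, h1⟩, h2⟩; exact ⟨k, hx, m, h1, h2⟩

theorem isPath_ofFn {Q : Fin 2 → Fin 2 → Set A} (n : ℕ) :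
    ∀ (i : Fin (n + 1) → Fin 2) (x : Fin n → A),
      (∀ k : Fin n, x k ∈ Q (i k.castSucc) (i k.succ)) →
      IsPath Q (i 0) (i (Fin.last n)) (List.ofFn x) := by
  induction n with
  | zero => intro i x _; simp [IsPath]
  | succ n ih =>
    intro i x h
    rw [List.ofFn_succ]
    exact ⟨i 1, h 0, ih (fun k => i k.succ) (fun k => x k.succ) (fun k => h k.succ)⟩

theorem IsPath.exists_fn {Q : Fin 2 → Fin 2 → Set A} {l : List A} :
    ∀ {i j : Fin 2}, IsPath Q i j l → ∃ (c : Fin (l.length + 1) → Fin 2),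
      c 0 = i ∧ ∀ k : Fin l.length, l.get k ∈ Q (c k.castSucc) (c k.succ) := by
  induction l with
  | nil => intro i j _; exact ⟨fun _ => i, rfl, fun k => k.elim0⟩
  | cons x l ih =>
    rintro i j ⟨k, hx, hl⟩
    obtain ⟨c, hc, h⟩ := ih hl
    refine ⟨Fin.cons i c, rfl, fun m => ?_⟩
    refine Fin.cases ?_ (fun m => ?_) m
    · simpa [hc] using hx
    · simpa using h m

/-- `R`-diagonality, stated for lists. -/
theorem RDiagWithAmalg.list {D : Set A} {E : A →ₗ[ℂ] A} {a : A} (ha : RDiagWithAmalg D E a)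
    {i j : Fin 2} {l : List A} (h : IsPath (Pset D E a) i j l) (hl : l ≠ []) :
    E l.prod = 0 := by
  obtain ⟨c, -, hc⟩ := h.exists_fn
  have := ha l.length (List.length_pos_iff.2 hl) c l.get hc
  rwa [List.ofFn_get] at this

/-! ### Consequences of freeness -/

/-- The unital subalgebra generated by `a a*`. -/
def Balg (a : A) : Subalgebra ℂ A := Algebra.adjoin ℂ ({a * star a} : Set A)

/-- The elements of `S` annihilated by the state `φ`. -/
def centred (φ : A →ₗ[ℂ] ℂ) (S : Set A) : Set A := {x ∈ S | φ x = 0}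

theorem sub_mem_centred {φ : A →ₗ[ℂ] ℂ} (h1 : φ 1 = 1) (S : Subalgebra ℂ A) {x : A} (hx : x ∈ S) :
    x - algebraMap ℂ A (φ x) ∈ centred φ (S : Set A) :=
  ⟨S.sub_mem hx (S.algebraMap_mem _), by simp [Algebra.algebraMap_eq_smul_one, h1]⟩

/-- Edges of the two-vertex graph whose paths are the alternating words in `B₀` (from `0` to `1`)
and `F₀` (from `1` to `0`). -/
def altEdges (B₀ F₀ : Set A) : Fin 2 → Fin 2 → Set A := ![![∅, B₀], ![F₀, ∅]]

theorem altEdges_ne {B₀ F₀ : Set A} {i j : Fin 2} {x : A} (h : x ∈ altEdges B₀ F₀ i j) : i ≠ j := by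
  rintro rfl
  fin_cases i <;> simp [altEdges] at h

theorem isPath_pow_FB {B₀ F₀ : Set A} (k : ℕ) :
    ∀ x ∈ (F₀ * B₀) ^ k, ∃ l : List A, IsPath (altEdges B₀ F₀) 1 1 l ∧ x = l.prod ∧
      l.length = 2 * k := by
  induction k with
  | zero =>
    intro x hx
    exact ⟨[], rfl, by simpa using hx, rfl⟩
  | succ k ih =>
    intro x hx
    rw [pow_succ'] at hx
    obtain ⟨_, ⟨f, hf, b, hb, rfl⟩, y, hy, rfl⟩ := hx
    obtain ⟨l, hl, rfl, hlen⟩ := ih y hy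
    exact ⟨f :: b :: l, ⟨0, hf, 1, hb, hl⟩, by simp [mul_assoc], by simp [hlen]; omega⟩

/-- Freeness, stated for lists: `φ` vanishes on nonempty alternating words in `B₀` and `F₀`. -/
theorem FreeScalar.list {F : StarSubalgebra ℂ A} {φ : A →ₗ[ℂ] ℂ} {a : A} (h1 : φ 1 = 1)
    (hfree : FreeScalar φ ![({a * star a} : Set A), (F : Set A)]) {i j : Fin 2} {l : List A}
    (h : IsPath (altEdges (centred φ (Balg a)) (centred φ F)) i j l) (hl : l ≠ []) :
    φ l.prod = 0 := by
  obtain ⟨c, -, hc⟩ := h.exists_fn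
  have key := hfree l.length (List.length_pos_iff.2 hl) (fun k => c k.castSucc) l.get ?_ ?_ ?_
  · rw [List.ofFn_get] at key
    have := congrArg φ key
    simpa [scalarE, Algebra.algebraMap_eq_smul_one, h1] using this
  · intro k
    have hk := hc k
    generalize c k.castSucc = p at hk ⊢
    generalize c k.succ = q at hk
    generalize l.get k = y at hk ⊢
    fin_cases p <;> fin_cases q <;> simp [altEdges, centred] at hk ⊢
    · exact Algebra.adjoin_mono (by simp) hk.1
    · exact Algebra.subset_adjoin (Or.inl hk.1)
  · intro k hk
    have := altEdges_ne (hc k)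
    exact this
  · intro k
    have hk := hc k
    generalize c k.castSucc = p at hk ⊢
    generalize c k.succ = q at hk
    generalize l.get k = y at hk ⊢
    fin_cases p <;> fin_cases q <;> simp [altEdges, centred] at hk <;> simp [scalarE, hk.2]

theorem mul_pow_swap (S T : Set A) (k : ℕ) : (S * T) ^ k * S = S * (T * S) ^ k := by
  induction k with
  | zero => simp
  | succ k ih => rw [pow_succ', mul_assoc, ih, pow_succ']; simp only [mul_assoc]

section Free

variable {F : StarSubalgebra ℂ A} {φ : A →ₗ[ℂ] ℂ} {a : A}

theorem phi_B_pow (h1 : φ 1 = 1)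
    (hfree : FreeScalar φ ![({a * star a} : Set A), (F : Set A)]) (k : ℕ) {x : A}
    (hx : x ∈ centred φ (Balg a) * (centred φ F * centred φ (Balg a)) ^ k) : φ x = 0 := by
  obtain ⟨b, hb, y, hy, rfl⟩ := hx
  obtain ⟨l, hl, rfl, -⟩ := isPath_pow_FB k y hy
  exact hfree.list h1 (i := 0) (j := 1) (l := b :: l) ⟨1, hb, hl⟩ (by simp)

theorem phi_pow_succ (h1 : φ 1 = 1)
    (hfree : FreeScalar φ ![({a * star a} : Set A), (F : Set A)]) (k : ℕ) {x : A}
    (hx : x ∈ (centred φ F * centred φ (Balg a)) ^ (k + 1)) : φ x = 0 := by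
  obtain ⟨l, hl, rfl, hlen⟩ := isPath_pow_FB _ x hx
  exact hfree.list h1 hl (by rintro rfl; simp at hlen)

theorem phi_pow_F (h1 : φ 1 = 1)
    (hfree : FreeScalar φ ![({a * star a} : Set A), (F : Set A)]) (k : ℕ) {x : A}
    (hx : x ∈ (centred φ F * centred φ (Balg a)) ^ k * centred φ F) : φ x = 0 := by
  obtain ⟨y, hy, f, hf, rfl⟩ := hx
  obtain ⟨l, hl, rfl, -⟩ := isPath_pow_FB k y hy
  have := hfree.list h1 (i := 1) (j := 0) (l := l ++ [f])
    (isPath_append.2 ⟨1, hl, 0, hf, rfl⟩) (by simp)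
  simpa using this

theorem phi_B_pow_F (h1 : φ 1 = 1)
    (hfree : FreeScalar φ ![({a * star a} : Set A), (F : Set A)]) (k : ℕ) {b x : A} (hb : b ∈ Balg a)
    (hx : x ∈ (centred φ F * centred φ (Balg a)) ^ k * centred φ F) : φ (b * x) = 0 := by
  have hb0 := sub_mem_centred h1 _ hb
  have h2 := phi_pow_F h1 hfree k hx
  obtain ⟨y, hy, f, hf, rfl⟩ := hx
  obtain ⟨l, hl, rfl, -⟩ := isPath_pow_FB k y hy
  have h3 := hfree.list h1 (i := 0) (j := 0) (l := _ :: (l ++ [f]))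
    ⟨1, hb0, isPath_append.2 ⟨1, hl, 0, hf, rfl⟩⟩ (by simp)
  simp only [List.prod_cons, List.prod_append, List.prod_nil, mul_one, sub_mul, map_sub] at h3
  rw [sub_eq_zero.1 h3, ← Algebra.smul_def, map_smul, h2, smul_zero]

theorem phi_F_B_pow (h1 : φ 1 = 1)
    (hfree : FreeScalar φ ![({a * star a} : Set A), (F : Set A)]) (k : ℕ) {f x : A} (hf : f ∈ F)
    (hx : x ∈ centred φ (Balg a) * (centred φ F * centred φ (Balg a)) ^ k) : φ (f * x) = 0 := by
  have hf0 : f - algebraMap ℂ A (φ f) ∈ centred φ (F : Set A) :=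
    sub_mem_centred h1 F.toSubalgebra hf
  have h2 := phi_B_pow h1 hfree k hx
  have h3 : φ ((f - algebraMap ℂ A (φ f)) * x) = 0 := by
    apply phi_pow_succ h1 hfree k
    rw [pow_succ', mul_assoc]
    exact Set.mul_mem_mul hf0 hx
  rw [sub_mul, map_sub, sub_eq_zero] at h3
  rw [h3, ← Algebra.smul_def, map_smul, h2, smul_zero]

end Free

/-! ### Spans of alternating words -/

/-- The letter that continues an alternating word of length `n` starting with `b`. -/
def nextLetter : Bool → ℕ → Bool
  | b, 0 => b
  | b, n + 1 => nextLetter (!b) n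

theorem altList_add (m n : ℕ) :
    ∀ b, altList b (m + n) = altList b m ++ altList (nextLetter b m) n := by
  induction m with
  | zero => intro b; simp [altList, nextLetter]
  | succ m ih => intro b; rw [Nat.add_right_comm]; simp [altList, nextLetter, ih]

theorem nextLetter_add (m n : ℕ) :
    ∀ b, nextLetter b (m + n) = nextLetter (nextLetter b m) n := by
  induction m with
  | zero => intro b; simp [nextLetter]
  | succ m ih => intro b; rw [Nat.add_right_comm]; simp [nextLetter, ih]

theorem nextLetter_eq (n : ℕ) : ∀ b, nextLetter b n = if Even n then b else !b := by
  induction n with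
  | zero => intro b; simp [nextLetter]
  | succ n ih => intro b; by_cases h : Even n <;> simp [nextLetter, ih, Nat.even_add_one, h]

/-- The span of the alternating words in `a, a*` with coefficients in `F` which start with the
letter `b` and can be continued by the letter `c` (the empty word is included if `b = c`). -/
def altSpan (F : StarSubalgebra ℂ A) (a : A) (b c : Bool) : Submodule ℂ A :=
  Submodule.span ℂ {x | ∃ n, nextLetter b n = c ∧ x ∈ wordSet (F : Set A) a (altList b n)}

section Words

variable {F : StarSubalgebra ℂ A} {a : A}

theorem mul_mem_wordSet {d x : A} (hd : d ∈ F) {l : List Bool} (hx : x ∈ wordSet (F : Set A) a l) :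
    d * x ∈ wordSet (F : Set A) a l := by
  cases l with
  | nil => exact F.mul_mem hd hx
  | cons b l =>
    obtain ⟨e, he, w, hw, rfl⟩ := hx
    exact ⟨d * e, F.mul_mem hd he, w, hw, by simp only [mul_assoc]⟩

theorem wordSet_append {l l' : List Bool} : ∀ {x y : A}, x ∈ wordSet (F : Set A) a l →
    y ∈ wordSet (F : Set A) a l' → x * y ∈ wordSet (F : Set A) a (l ++ l') := by
  induction l with
  | nil => intro x y hx hy; exact mul_mem_wordSet hx hy
  | cons b l ih =>
    rintro x y ⟨d, hd, w, hw, rfl⟩ hy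
    exact ⟨d, hd, w * y, ih hw hy, by simp only [mul_assoc]⟩

theorem altSpan_mul {b c d : Bool} {x y : A} (hx : x ∈ altSpan F a b c) (hy : y ∈ altSpan F a c d) :
    x * y ∈ altSpan F a b d := by
  have h := Submodule.mul_mem_mul hx hy
  rw [altSpan, altSpan, Submodule.span_mul_span] at h
  refine Submodule.span_mono ?_ h
  rintro _ ⟨u, ⟨m, rfl, hu⟩, v, ⟨n, rfl, hv⟩, rfl⟩
  exact ⟨m + n, nextLetter_add _ _ _, by rw [altList_add]; exact wordSet_append hu hv⟩

theorem mem_altSpan_of_mem {b : Bool} {f : A} (hf : f ∈ F) : f ∈ altSpan F a b b :=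
  Submodule.subset_span ⟨0, rfl, hf⟩

theorem letter_mem_altSpan (b : Bool) : letter a b ∈ altSpan F a b (!b) :=
  Submodule.subset_span ⟨1, rfl, 1, F.one_mem, 1, F.one_mem, by simp⟩

theorem a_mem_altSpan : a ∈ altSpan F a true false := letter_mem_altSpan true

theorem star_mem_altSpan : star a ∈ altSpan F a false true := letter_mem_altSpan false

theorem B_mem_altSpan {x : A} (hx : x ∈ Balg a) : x ∈ altSpan F a true true := by
  induction hx using Algebra.adjoin_induction with
  | mem x hx =>
    rw [Set.mem_singleton_iff.1 hx]
    exact altSpan_mul a_mem_altSpan star_mem_altSpan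
  | algebraMap r => exact mem_altSpan_of_mem (F.algebraMap_mem r)
  | add x y _ _ hx hy => exact add_mem hx hy
  | mul x y _ _ hx hy => exact altSpan_mul hx hy

theorem pow_mem_altSpan {S : Set A} (hS : ∀ x ∈ S, x ∈ altSpan F a true true) (k : ℕ) :
    ∀ x ∈ S ^ k, x ∈ altSpan F a true true := by
  induction k with
  | zero =>
    intro x hx
    rw [pow_zero, Set.mem_one] at hx
    exact hx ▸ mem_altSpan_of_mem F.one_mem
  | succ k ih =>
    intro x hx
    rw [pow_succ] at hx
    obtain ⟨y, hy, z, hz, rfl⟩ := hx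
    exact altSpan_mul (ih y hy) (hS z hz)

theorem altSpan_even {b : Bool} {x : A} (hx : x ∈ altSpan F a b b) :
    x ∈ Submodule.span ℂ (⋃ m : ℕ, wordSet (F : Set A) a (altList b (2 * m))) := by
  refine Submodule.span_mono ?_ hx
  rintro y ⟨n, hn, hy⟩
  rw [nextLetter_eq] at hn
  have he : Even n := by
    by_contra h
    cases b <;> simp [h] at hn
  obtain ⟨m, rfl⟩ := he.two_dvd
  exact Set.mem_iUnion.2 ⟨m, hy⟩

theorem altSpan_odd {b : Bool} {x : A} (hx : x ∈ altSpan F a b (!b)) :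
    x ∈ Submodule.span ℂ (⋃ m : ℕ, wordSet (F : Set A) a (altList b (2 * m + 1))) := by
  refine Submodule.span_mono ?_ hx
  rintro y ⟨n, hn, hy⟩
  rw [nextLetter_eq] at hn
  have he : Odd n := by
    rw [← Nat.not_even_iff_odd]
    intro h
    cases b <;> simp [h] at hn
  obtain ⟨m, rfl⟩ := he
  exact Set.mem_iUnion.2 ⟨m, hy⟩

end Words

/-! ### The sets `Q` -/

theorem tailRep_eq (S T W : Set A) (k : ℕ) : tailRep S T W k = W * (S * T) ^ k := by
  induction k with
  | zero => simp [tailRep]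
  | succ k ih => rw [tailRep, ih, pow_succ, mul_assoc]

theorem headRep_eq (S T W : Set A) (k : ℕ) : headRep S T W k = (S * T) ^ k * W := by
  induction k with
  | zero => simp [headRep]
  | succ k ih => rw [headRep, ih, pow_succ']; simp only [mul_assoc]

/-- Spanning set of `Q₁₂` before centring. -/
def genQ01 (F : StarSubalgebra ℂ A) (a : A) : Set A :=
  F ∪ ⋃ k : ℕ, {star a} * ((Balg a : Set A) * ((F : Set A) * Balg a) ^ k) * {a}

section Q

variable {F : StarSubalgebra ℂ A} {φ : A →ₗ[ℂ] ℂ} {a : A}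

theorem Qset_00 : Qset φ (F : Set A) a 0 0 = ↑(Submodule.span ℂ
    (⋃ k : ℕ, {star a} * (Balg a : Set A) * (centred φ F * centred φ (Balg a)) ^ k)) := by
  simp only [← tailRep_eq]; rfl

theorem Qset_01 : Qset φ (F : Set A) a 0 1 =
    {x | x ∈ Submodule.span ℂ (genQ01 F a) ∧ φ x = 0} := by
  simp only [genQ01, ← tailRep_eq]; rfl

theorem Qset_10 : Qset φ (F : Set A) a 1 0 = ↑(Submodule.span ℂ
    (⋃ k : ℕ, centred φ (Balg a) * (centred φ F * centred φ (Balg a)) ^ k)) := by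
  simp only [← tailRep_eq]; rfl

theorem Qset_11 : Qset φ (F : Set A) a 1 1 = ↑(Submodule.span ℂ
    (⋃ k : ℕ, (centred φ (Balg a) * centred φ F) ^ k * ((Balg a : Set A) * {a}))) := by
  simp only [← headRep_eq]; rfl

theorem FB_mem_altSpan (x : A) (hx : x ∈ (F : Set A) * Balg a) : x ∈ altSpan F a true true := by
  obtain ⟨f, hf, b, hb, rfl⟩ := hx
  exact altSpan_mul (mem_altSpan_of_mem hf) (B_mem_altSpan hb)

theorem BF_mem_altSpan (x : A) (hx : x ∈ (Balg a : Set A) * (F : Set A)) :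
    x ∈ altSpan F a true true := by
  obtain ⟨b, hb, f, hf, rfl⟩ := hx
  exact altSpan_mul (B_mem_altSpan hb) (mem_altSpan_of_mem hf)

theorem centred_subset (S : Set A) : centred φ S ⊆ S := fun _ h => h.1

theorem Qset_00_le {x : A} (hx : x ∈ Qset φ (F : Set A) a 0 0) : x ∈ altSpan F a false true := by
  rw [Qset_00] at hx
  refine Submodule.span_le.2 ?_ hx
  refine Set.iUnion_subset fun k => ?_
  rintro _ ⟨_, ⟨_, rfl, b, hb, rfl⟩, y, hy, rfl⟩
  refine altSpan_mul (altSpan_mul star_mem_altSpan (B_mem_altSpan hb))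
    (pow_mem_altSpan FB_mem_altSpan k _ ?_)
  exact Set.pow_subset_pow_left (Set.mul_subset_mul (centred_subset _) (centred_subset _)) hy

theorem Qset_10_le {x : A} (hx : x ∈ Qset φ (F : Set A) a 1 0) : x ∈ altSpan F a true true := by
  rw [Qset_10] at hx
  refine Submodule.span_le.2 ?_ hx
  refine Set.iUnion_subset fun k => ?_
  rintro _ ⟨b, hb, y, hy, rfl⟩
  refine altSpan_mul (B_mem_altSpan hb.1) (pow_mem_altSpan FB_mem_altSpan k _ ?_)
  exact Set.pow_subset_pow_left (Set.mul_subset_mul (centred_subset _) (centred_subset _)) hy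

theorem Qset_11_le {x : A} (hx : x ∈ Qset φ (F : Set A) a 1 1) : x ∈ altSpan F a true false := by
  rw [Qset_11] at hx
  refine Submodule.span_le.2 ?_ hx
  refine Set.iUnion_subset fun k => ?_
  rintro _ ⟨y, hy, _, ⟨b, hb, _, rfl, rfl⟩, rfl⟩
  refine altSpan_mul (pow_mem_altSpan BF_mem_altSpan k _ ?_)
    (altSpan_mul (B_mem_altSpan hb) a_mem_altSpan)
  exact Set.pow_subset_pow_left (Set.mul_subset_mul (centred_subset _) (centred_subset _)) hy

theorem span_genQ01_le {x : A} (hx : x ∈ Submodule.span ℂ (genQ01 F a)) :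
    x ∈ altSpan F a false false := by
  refine Submodule.span_le.2 ?_ hx
  refine Set.union_subset (fun f hf => mem_altSpan_of_mem hf) (Set.iUnion_subset fun k => ?_)
  rintro _ ⟨_, ⟨_, rfl, _, ⟨b, hb, y, hy, rfl⟩, rfl⟩, _, rfl, rfl⟩
  exact altSpan_mul (altSpan_mul star_mem_altSpan
    (altSpan_mul (B_mem_altSpan hb) (pow_mem_altSpan FB_mem_altSpan k _ hy))) a_mem_altSpan

theorem condExp_mul_left {E : A →ₗ[ℂ] A} (hE : IsCondExp (F : Set A) E) {f : A} (hf : f ∈ F)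
    (x : A) : E (f * x) = f * E x := by
  simpa using hE.2.2 f hf 1 F.one_mem x

theorem condExp_mul_right {E : A →ₗ[ℂ] A} (hE : IsCondExp (F : Set A) E) {f : A} (hf : f ∈ F)
    (x : A) : E (x * f) = E x * f := by
  simpa using hE.2.2 1 F.one_mem f hf x

theorem condExp_of_mem {E : A →ₗ[ℂ] A} (hE : IsCondExp (F : Set A) E) {f : A} (hf : f ∈ F) :
    E f = f := by
  simpa [hE.1] using condExp_mul_left hE hf 1

/-- An element orthogonal to `F` with respect to `φ` is annihilated by `E`, by faithfulness. -/
theorem condExp_eq_zero_of_orthogonal {E : A →ₗ[ℂ] A} (hE : IsCondExp (F : Set A) E)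
    (hφ : IsFaithfulTracialState φ) (hcompat : ∀ x : A, φ (E x) = φ x) {x : A}
    (h : ∀ f ∈ F, φ (f * x) = 0) : E x = 0 := by
  have hs : star (E x) ∈ F := star_mem (hE.2.1 x)
  apply hφ.faithful
  rw [← condExp_mul_left hE hs, hcompat]
  exact h _ hs

theorem condExp_eq_zero_of_mem_Q10 {E : A →ₗ[ℂ] A} (hE : IsCondExp (F : Set A) E)
    (hφ : IsFaithfulTracialState φ) (hcompat : ∀ x : A, φ (E x) = φ x)
    (hfree : FreeScalar φ ![({a * star a} : Set A), (F : Set A)])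
    {x : A} (hx : x ∈ Qset φ (F : Set A) a 1 0) : E x = 0 := by
  rw [Qset_10] at hx
  have : Submodule.span ℂ
      (⋃ k : ℕ, centred φ (Balg a) * (centred φ F * centred φ (Balg a)) ^ k) ≤ LinearMap.ker E := by
    refine Submodule.span_le.2 (Set.iUnion_subset fun k y hy => ?_)
    exact condExp_eq_zero_of_orthogonal hE hφ hcompat
      fun f hf => phi_F_B_pow hφ.unital hfree k hf hy
  exact this hx

/-- Each element of `Q i k` lies in `P i k`, up to a summand from `F₀` if `(i, k) = (1, 2)`. -/
theorem Qset_split {E : A →ₗ[ℂ] A} (hE : IsCondExp (F : Set A) E)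
    (hφ : IsFaithfulTracialState φ) (hcompat : ∀ x : A, φ (E x) = φ x)
    (hfree : FreeScalar φ ![({a * star a} : Set A), (F : Set A)])
    {i k : Fin 2} {x : A} (hx : x ∈ Qset φ (F : Set A) a i k) :
    x ∈ Pset (F : Set A) E a i k ∨ (i = 0 ∧ k = 1 ∧ ∃ y f,
      y ∈ Qset φ (F : Set A) a i k ∧ y ∈ Pset (F : Set A) E a i k ∧ f ∈ F ∧ φ f = 0 ∧
      x = y + f) := by
  obtain rfl | rfl : i = 0 ∨ i = 1 := by omega
  · obtain rfl | rfl : k = 0 ∨ k = 1 := by omega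
    · exact Or.inl (altSpan_odd (b := false) (Qset_00_le hx))
    · right
      rw [Qset_01] at hx ⊢
      have hF : E x ∈ F := hE.2.1 x
      have hm : x - E x ∈ Submodule.span ℂ (genQ01 F a) :=
        sub_mem hx.1 (Submodule.subset_span (Or.inl hF))
      refine ⟨rfl, rfl, x - E x, E x, ⟨hm, by simp [hcompat]⟩,
        ⟨altSpan_even (span_genQ01_le hm), ?_⟩, hF, by rw [hcompat, hx.2], by simp⟩
      rw [map_sub, condExp_of_mem hE hF, sub_self]
  · left
    obtain rfl | rfl : k = 0 ∨ k = 1 := by omega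
    · exact ⟨altSpan_even (Qset_10_le hx), condExp_eq_zero_of_mem_Q10 hE hφ hcompat hfree hx⟩
    · exact altSpan_odd (b := true) (Qset_11_le hx)

theorem mul_mul_mem_of_span {S T : Set A} {N : Submodule ℂ A} {f : A}
    (h : ∀ s ∈ S, ∀ t ∈ T, s * f * t ∈ N) {y z : A} (hy : y ∈ Submodule.span ℂ S)
    (hz : z ∈ Submodule.span ℂ T) : y * f * z ∈ N := by
  induction hy using Submodule.span_induction with
  | mem s hs =>
    induction hz using Submodule.span_induction with
    | mem t ht => exact h s hs t ht
    | zero => simp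
    | add u v _ _ hu hv => rw [mul_add]; exact add_mem hu hv
    | smul c u _ hu => rw [mul_smul_comm]; exact N.smul_mem c hu
  | zero => simp
  | add u v _ _ hu hv => rw [add_mul, add_mul]; exact add_mem hu hv
  | smul c u _ hu => rw [smul_mul_assoc, smul_mul_assoc]; exact N.smul_mem c hu

/-- A factor of `F₀` in the interior of a product is absorbed by its neighbours. -/
theorem Qset_merge (hφ : IsFaithfulTracialState φ)
    (hfree : FreeScalar φ ![({a * star a} : Set A), (F : Set A)])
    {i k : Fin 2} {y f z : A} (hy : y ∈ Qset φ (F : Set A) a i 0) (hf : f ∈ F) (hf0 : φ f = 0)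
    (hz : z ∈ Qset φ (F : Set A) a 1 k) : y * f * z ∈ Qset φ (F : Set A) a i k := by
  have hff : f ∈ centred φ (F : Set A) := ⟨hf, hf0⟩
  obtain rfl | rfl : i = 0 ∨ i = 1 := by omega
  · obtain rfl | rfl : k = 0 ∨ k = 1 := by omega
    · rw [Qset_00] at hy ⊢
      rw [Qset_10] at hz
      refine mul_mul_mem_of_span ?_ hy hz
      intro s hs t ht
      obtain ⟨p, hs⟩ := Set.mem_iUnion.1 hs
      obtain ⟨q, ht⟩ := Set.mem_iUnion.1 ht
      refine Submodule.subset_span (Set.mem_iUnion.2 ⟨p + 1 + q, ?_⟩)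
      have := Set.mul_mem_mul (Set.mul_mem_mul hs hff) ht
      rw [pow_add, pow_succ]
      simpa only [mul_assoc] using this
    · rw [Qset_00] at hy
      rw [Qset_11] at hz
      rw [Qset_01]
      suffices y * f * z ∈ Submodule.span ℂ (genQ01 F a) ⊓ LinearMap.ker φ from this
      refine mul_mul_mem_of_span ?_ hy hz
      intro s hs t ht
      obtain ⟨p, hs⟩ := Set.mem_iUnion.1 hs
      obtain ⟨q, ht⟩ := Set.mem_iUnion.1 ht
      obtain ⟨_, ⟨_, rfl, b, hb, rfl⟩, u, hu, rfl⟩ := hs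
      obtain ⟨v, hv, _, ⟨c, hc, a', hmem, rfl⟩, rfl⟩ := ht
      have haa : a = a' := (Set.mem_singleton_iff.1 hmem).symm
      subst haa
      -- The alternating word `u f v` starts and ends in `F₀`.
      have hw : u * f * v ∈
          (centred φ (F : Set A) * centred φ (Balg a)) ^ (p + q) * centred φ F := by
        have := Set.mul_mem_mul hu (Set.mul_mem_mul hff hv)
        rwa [← mul_pow_swap, ← mul_assoc, ← pow_add, ← mul_assoc] at this
      refine ⟨?_, ?_⟩
      · refine Submodule.subset_span (Or.inr (Set.mem_iUnion.2 ⟨p + q + 1, ?_⟩))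
        have h2 : u * f * v * c ∈ ((F : Set A) * Balg a) ^ (p + q + 1) := by
          have := Set.mul_mem_mul hw hc
          rw [mul_assoc] at this
          rw [pow_succ]
          refine Set.mul_subset_mul (Set.pow_subset_pow_left
            (Set.mul_subset_mul (centred_subset _) (centred_subset _)))
            (Set.mul_subset_mul_right (centred_subset _)) this
        have := Set.mul_mem_mul (Set.mul_mem_mul (Set.mem_singleton (star a))
          (Set.mul_mem_mul hb h2)) (Set.mem_singleton a)
        simpa only [mul_assoc] using this
      · change φ (star a * b * u * f * (v * (c * a))) = 0
        -- Traciality moves `c a` to the front, and `c a a* b ∈ B`.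
        have ht := hφ.tracial (star a * b * (u * f * v)) (c * a)
        have hB : c * (a * star a) * b ∈ Balg a :=
          mul_mem (mul_mem hc (Algebra.subset_adjoin rfl)) hb
        have h0 := phi_B_pow_F hφ.unital hfree _ hB hw
        simp only [mul_assoc] at ht h0 ⊢
        rw [ht, h0]
  · obtain rfl | rfl : k = 0 ∨ k = 1 := by omega
    · rw [Qset_10] at hy hz ⊢
      refine mul_mul_mem_of_span ?_ hy hz
      intro s hs t ht
      obtain ⟨p, hs⟩ := Set.mem_iUnion.1 hs
      obtain ⟨q, ht⟩ := Set.mem_iUnion.1 ht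
      refine Submodule.subset_span (Set.mem_iUnion.2 ⟨p + 1 + q, ?_⟩)
      have := Set.mul_mem_mul (Set.mul_mem_mul hs hff) ht
      rw [pow_add, pow_succ]
      simpa only [mul_assoc] using this
    · rw [Qset_10] at hy
      rw [Qset_11] at hz ⊢
      refine mul_mul_mem_of_span ?_ hy hz
      intro s hs t ht
      obtain ⟨p, hs⟩ := Set.mem_iUnion.1 hs
      obtain ⟨q, ht⟩ := Set.mem_iUnion.1 ht
      refine Submodule.subset_span (Set.mem_iUnion.2 ⟨p + 1 + q, ?_⟩)
      have := Set.mul_mem_mul (Set.mul_mem_mul hs hff) ht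
      rw [pow_add, pow_succ', mul_assoc (centred φ _), ← mul_pow_swap]
      simpa only [mul_assoc] using this

end Q

/-! ### Induction on the length of the product -/

/-- The conclusion of the theorem for a product `x` of type `(i, j)`. -/
def Vanishes (φ : A →ₗ[ℂ] ℂ) (E : A →ₗ[ℂ] A) (i j : Fin 2) (x : A) : Prop :=
  φ x = 0 ∧ (¬(i = 0 ∧ j = 1) → E x = 0)

theorem Vanishes.of_condExp {φ : A →ₗ[ℂ] ℂ} {E : A →ₗ[ℂ] A} (hcompat : ∀ x : A, φ (E x) = φ x)
    {i j : Fin 2} {x : A} (h : E x = 0) : Vanishes φ E i j x :=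
  ⟨by rw [← hcompat, h, map_zero], fun _ => h⟩

theorem Vanishes.add {φ : A →ₗ[ℂ] ℂ} {E : A →ₗ[ℂ] A} {i j : Fin 2} {x y : A}
    (hx : Vanishes φ E i j x) (hy : Vanishes φ E i j y) : Vanishes φ E i j (x + y) :=
  ⟨by rw [map_add, hx.1, hy.1, add_zero],
    fun h => by rw [map_add, hx.2 h, hy.2 h, add_zero]⟩

/-- A product along a path in `Q` with a factor `f ∈ F₀` in place of an element of `Q₁₂` reduces
to a shorter product. -/
theorem vanishes_insert {F : StarSubalgebra ℂ A} {E : A →ₗ[ℂ] A} (hE : IsCondExp (F : Set A) E)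
    {φ : A →ₗ[ℂ] ℂ} (hφ : IsFaithfulTracialState φ) (hcompat : ∀ x : A, φ (E x) = φ x) {a : A}
    (hfree : FreeScalar φ ![({a * star a} : Set A), (F : Set A)]) {i j : Fin 2}
    {pre suf : List A} (hpre : IsPath (Qset φ (F : Set A) a) i 0 pre)
    (hsuf : IsPath (Qset φ (F : Set A) a) 1 j suf) {f : A} (hf : f ∈ F) (hf0 : φ f = 0)
    (ih : ∀ (l : List A) (i j : Fin 2), l.length < pre.length + suf.length + 1 → l ≠ [] →
      IsPath (Qset φ (F : Set A) a) i j l → Vanishes φ E i j l.prod) :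
    Vanishes φ E i j (pre.prod * (f * suf.prod)) := by
  rcases List.eq_nil_or_concat' pre with rfl | ⟨pre, y, rfl⟩
  · obtain rfl : i = 0 := hpre
    cases suf with
    | nil =>
      obtain rfl : 1 = j := hsuf
      exact ⟨by simpa using hf0, fun h => absurd ⟨rfl, rfl⟩ h⟩
    | cons z t =>
      apply Vanishes.of_condExp hcompat
      rw [List.prod_nil, one_mul, condExp_mul_left hE hf,
        (ih _ 1 j (by simp) (by simp) hsuf).2 (by simp), mul_zero]
  · cases suf with
    | nil =>
      apply Vanishes.of_condExp hcompat
      rw [List.prod_nil, mul_one, condExp_mul_right hE hf,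
        (ih _ i 0 (by simp) (by simp) hpre).2 (by simp), zero_mul]
    | cons z t =>
      obtain ⟨p, h1, q, hy, rfl⟩ := isPath_append.1 hpre
      obtain ⟨r, hz, h2⟩ := hsuf
      have := ih (pre ++ (y * f * z) :: t) i j (by simp) (by simp)
        (isPath_append.2 ⟨p, h1, r, Qset_merge hφ hfree hy hf hf0 hz, h2⟩)
      simpa [mul_assoc] using this

theorem vanishes_of_isPath {F : StarSubalgebra ℂ A} {E : A →ₗ[ℂ] A}
    (hE : IsCondExp (F : Set A) E) {φ : A →ₗ[ℂ] ℂ} (hφ : IsFaithfulTracialState φ)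
    (hcompat : ∀ x : A, φ (E x) = φ x) {a : A} (ha : RDiagWithAmalg (F : Set A) E a)
    (hfree : FreeScalar φ ![({a * star a} : Set A), (F : Set A)]) (n : ℕ) :
    ∀ (l : List A) (i j : Fin 2), l.length = n → l ≠ [] →
      IsPath (Qset φ (F : Set A) a) i j l → Vanishes φ E i j l.prod := by
  induction n using Nat.strong_induction_on with
  | _ n ih =>
    -- The factors in `pre` already lie in the sets `P`; those in `suf` remain to be split.
    have inner : ∀ (suf pre : List A) (i k j : Fin 2), (pre ++ suf).length = n → pre ++ suf ≠ [] →
        IsPath (fun i j => Qset φ (F : Set A) a i j ∩ Pset (F : Set A) E a i j) i k pre →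
        IsPath (Qset φ (F : Set A) a) k j suf → Vanishes φ E i j (pre ++ suf).prod := by
      intro suf
      induction suf with
      | nil =>
        intro pre i k j _ hne hpre _
        rw [List.append_nil] at hne ⊢
        exact Vanishes.of_condExp hcompat
          (ha.list (hpre.mono fun _ _ => Set.inter_subset_right) hne)
      | cons x suf ih2 =>
        rintro pre i k j hlen hne hpre ⟨m, hx, hsuf⟩
        have move : ∀ y, y ∈ Qset φ (F : Set A) a k m → y ∈ Pset (F : Set A) E a k m →
            Vanishes φ E i j (pre.prod * (y * suf.prod)) := by
          intro y hy hy'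
          have := ih2 (pre ++ [y]) i m j (by simpa using hlen) (by simp)
            (isPath_append.2 ⟨k, hpre, m, ⟨hy, hy'⟩, rfl⟩) hsuf
          simpa [mul_assoc] using this
        rw [List.prod_append, List.prod_cons]
        rcases Qset_split hE hφ hcompat hfree hx with h | ⟨rfl, rfl, y, f, hy, hy', hf, hf0, rfl⟩
        · exact move x hx h
        · rw [add_mul, mul_add]
          refine (move y hy hy').add (vanishes_insert hE hφ hcompat hfree
            (hpre.mono fun _ _ => Set.inter_subset_left) hsuf hf hf0 ?_)
          intro l i j hl hl' hp
          refine ih l.length ?_ l i j rfl hl' hp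
          simp at hlen
          omega
    intro l i j hlen hne hl
    exact inner l [] i i j hlen hne rfl hl

/-- Under the hypotheses of Theorem `rDiagonal_of_rDiagonal_with_amalgamation`
(compatible structures, `a` `R`-diagonal with amalgamation over `F`, `{a a*}` free from `F`),
every alternating product from the sets `Q_{ij}` is annihilated by `φ`, and by `E` provided
`(i₁, i_{n+1}) ≠ (1, 2)`. -/
theorem Q_products_vanish
    (F : StarSubalgebra ℂ A) (E : A →ₗ[ℂ] A) (hE : IsCondExp (F : Set A) E)
    (φ : A →ₗ[ℂ] ℂ) (hφ : IsFaithfulTracialState φ)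
    (hcompat : ∀ x : A, φ (E x) = φ x)
    (a : A)
    (ha : RDiagWithAmalg (F : Set A) E a)
    (hfree : FreeScalar φ ![({a * star a} : Set A), (F : Set A)]) :
    ∀ n : ℕ, 0 < n → ∀ (i : Fin (n + 1) → Fin 2) (x : Fin n → A),
      (∀ k : Fin n, x k ∈ Qset φ (F : Set A) a (i k.castSucc) (i k.succ)) →
      φ (List.ofFn x).prod = 0 ∧
        (¬(i 0 = 0 ∧ i (Fin.last n) = 1) → E (List.ofFn x).prod = 0) := by
  intro n hn i x hx
  exact vanishes_of_isPath hE hφ hcompat ha hfree n (List.ofFn x) _ _ (by simp)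
    (by simpa using hn.ne') (isPath_ofFn n i x hx)

end
end

section
/- Let A be a unital *-algebra carrying a D-valued probability space structure (D ⊆ A, E) and a scalar probability space structure (A, φ) which are compatible. Let X and B be unital subalgebras of A such that X and B are free with amalgamation over D and such that X and D are free with respect to φ. Then X and B are free with respect to φ. -/
/-! ### Alternating words -/

/-- `AltWord K s a`: the element `a` is a nonempty product of letters from the sets `K i`, with
neighbouring letters carrying different indices and the last letter carrying the index `s`. -/
inductive AltWord {A : Type*} [Mul A] {ι : Type*} (K : ι → Set A) : ι → A → Prop
  | single {s : ι} {a : A} : a ∈ K s → AltWord K s a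
  | snoc {s t : ι} {u a : A} : AltWord K s u → s ≠ t → a ∈ K t → AltWord K t (u * a)

/-- The letters of index `s` in the definition of freeness with amalgamation. -/
def centered {A : Type*} [Ring A] [Algebra ℂ A] (D : Set A) (E : A →ₗ[ℂ] A) {ι : Type*}
    (X : ι → Set A) (s : ι) : Set A :=
  {a | a ∈ Algebra.adjoin ℂ (X s ∪ D) ∧ E a = 0}

theorem altWord_ofFn {A : Type*} [Monoid A] {ι : Type*} {K : ι → Set A} (n : ℕ)
    (s : Fin (n + 1) → ι) (x : Fin (n + 1) → A) (hx : ∀ k, x k ∈ K (s k))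
    (hs : ∀ (k : Fin (n + 1)) (h : k.val + 1 < n + 1), s k ≠ s ⟨k.val + 1, h⟩) :
    AltWord K (s (Fin.last n)) (List.ofFn x).prod := by
  induction n with
  | zero => simpa using AltWord.single (hx 0)
  | succ n ih =>
    rw [List.ofFn_succ', List.concat_eq_append, List.prod_append, List.prod_singleton]
    refine AltWord.snoc (ih (fun k => s k.castSucc) (fun k => x k.castSucc)
      (fun k => hx _) (fun k h => ?_)) ?_ (hx _)
    · exact hs k.castSucc (by simp; omega)
    · exact hs (Fin.last n).castSucc (by simp)

theorem AltWord.exists_ofFn {A : Type*} [Monoid A] {ι : Type*} {K : ι → Set A} {t : ι} {a : A}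
    (h : AltWord K t a) :
    ∃ (n : ℕ) (s : Fin (n + 1) → ι) (x : Fin (n + 1) → A), (∀ k, x k ∈ K (s k)) ∧
      (∀ (k : Fin (n + 1)) (h : k.val + 1 < n + 1), s k ≠ s ⟨k.val + 1, h⟩) ∧
      s (Fin.last n) = t ∧ (List.ofFn x).prod = a := by
  induction h with
  | @single s a ha =>
    exact ⟨0, fun _ => s, fun _ => a, fun _ => ha, fun k h => by omega, rfl, by simp⟩
  | @snoc s' t u a hu hst ha ih =>
    obtain ⟨n, s, x, hx, hs, hl, hp⟩ := ih
    refine ⟨n + 1, Fin.snoc (α := fun _ => ι) s t, Fin.snoc (α := fun _ => A) x a, ?_, ?_,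
      by simp, ?_⟩
    · intro k
      induction k using Fin.lastCases with
      | last => simpa using ha
      | cast k => simpa using hx k
    · intro k h
      induction k using Fin.lastCases with
      | last => simp at h
      | cast k =>
        rw [Fin.snoc_castSucc]
        by_cases hk : k.val + 1 < n + 1
        · have : (⟨k.castSucc.val + 1, h⟩ : Fin (n + 2)) = Fin.castSucc ⟨k.val + 1, hk⟩ := rfl
          rw [this, Fin.snoc_castSucc]
          exact hs k hk
        · have hk' : k = Fin.last n := by ext; simp; omega
          subst hk'
          have : (⟨(Fin.last n).castSucc.val + 1, h⟩ : Fin (n + 2)) = Fin.last (n + 1) := rfl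
          rw [this, Fin.snoc_last, hl]
          exact hst
    · rw [List.ofFn_succ', List.concat_eq_append, List.prod_append, List.prod_singleton]
      simp only [Fin.snoc_castSucc, Fin.snoc_last, hp]

/-- Freeness in terms of `AltWord`, which allows induction on the last letter in place of
families indexed by `Fin n`. -/
theorem freeAmalg_iff_altWord {A : Type*} [Ring A] [Algebra ℂ A] {D : Set A} {E : A →ₗ[ℂ] A}
    {ι : Type*} {X : ι → Set A} :
    FreeAmalg D E X ↔ ∀ s a, AltWord (centered D E X) s a → E a = 0 := by
  constructor
  · intro h t a ha
    obtain ⟨n, s, x, hx, hs, -, rfl⟩ := ha.exists_ofFn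
    exact h (n + 1) n.succ_pos s x (fun k => (hx k).1) hs (fun k => (hx k).2)
  · intro h n hn s x hx hs hE
    obtain ⟨n, rfl⟩ := Nat.exists_eq_succ_of_ne_zero hn.ne'
    exact h _ _ (altWord_ofFn n s x (fun k => ⟨hx k, hE k⟩) hs)

/-! ### Freeness with respect to a state -/

section FreeProof
variable {A : Type*} [Ring A] [Algebra ℂ A]

/-- The letters of index `s` in the definition of freeness with respect to `φ`: the elements of
`Y s` that `φ` kills. -/
def kerLetters (φ : A →ₗ[ℂ] ℂ) (Y : Fin 2 → Set A) (s : Fin 2) : Set A :=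
  {a | a ∈ Y s ∧ φ a = 0}

theorem scalarE_eq_zero_iff {φ : A →ₗ[ℂ] ℂ} (h1 : φ 1 = 1) (a : A) :
    scalarE φ a = 0 ↔ φ a = 0 := by
  refine ⟨fun h => ?_, fun h => by simp [scalarE, h]⟩
  have := congrArg φ h
  simpa [scalarE, Algebra.algebraMap_eq_smul_one, h1] using this

/-- For a pair of subalgebras, adjoining the scalars adds nothing to the letters. -/
theorem centered_scalar (φ : A →ₗ[ℂ] ℂ) (h1 : φ 1 = 1) (X Y : Subalgebra ℂ A) :
    centered (scalarD A) (scalarE φ) ![(X : Set A), (Y : Set A)] =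
      kerLetters φ ![(X : Set A), (Y : Set A)] := by
  have key (Z : Subalgebra ℂ A) (a : A) :
      a ∈ Algebra.adjoin ℂ ((Z : Set A) ∪ scalarD A) ↔ a ∈ Z := by
    refine ⟨fun h => ?_, fun h => Algebra.subset_adjoin (Or.inl h)⟩
    refine Algebra.adjoin_le (S := Z) ?_ h
    rintro _ (hz | ⟨c, rfl⟩)
    · exact hz
    · exact Z.algebraMap_mem c
  funext s
  ext a
  fin_cases s <;> simp [centered, kerLetters, key, scalarE_eq_zero_iff h1]

theorem freeScalar_iff_altWord {φ : A →ₗ[ℂ] ℂ} (h1 : φ 1 = 1) {X Y : Subalgebra ℂ A} :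
    FreeScalar φ ![(X : Set A), (Y : Set A)] ↔
      ∀ s a, AltWord (kerLetters φ ![(X : Set A), (Y : Set A)]) s a → φ a = 0 := by
  rw [FreeScalar, freeAmalg_iff_altWord, centered_scalar φ h1]
  simp only [scalarE_eq_zero_iff h1]

theorem IsCondExp.map_mul_right {D : Set A} {E : A →ₗ[ℂ] A} (hE : IsCondExp D E) (h1 : 1 ∈ D)
    (x : A) {d : A} (hd : d ∈ D) : E (x * d) = E x * d := by
  simpa using hE.2.2 1 h1 d hd x

theorem IsCondExp.map_self {D : Set A} {E : A →ₗ[ℂ] A} (hE : IsCondExp D E) (h1 : 1 ∈ D)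
    {d : A} (hd : d ∈ D) : E d = d := by
  simpa [hE.1] using hE.map_mul_right h1 1 hd

/-! ### Expansion of words in `X°` and `B°` -/

/-- The terms in the expansion of an alternating word whose last letter has index `s` (`0` for
`X`, `1` for `B`): a word `H` in `X°` and `D°`, or such a word preceded by an amalgamated word `K`
ending in the algebra generated by `B` and `D`, or only the latter. -/
def Expanded (H K : Fin 2 → Set A) (s : Fin 2) (v : A) : Prop :=
  AltWord H s v ∨ (∃ u r, AltWord K 1 u ∧ AltWord H s r ∧ v = u * r) ∨ (s = 1 ∧ AltWord K 1 v)

variable [StarRing A] [StarModule ℂ A] {D : StarSubalgebra ℂ A} {E : A →ₗ[ℂ] A}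
  {φ : A →ₗ[ℂ] ℂ} {X B : Subalgebra ℂ A}

/-- An element of `A` that `φ` cannot distinguish from `0` when paired with `D` has conditional
expectation `0`. -/
theorem condExp_eq_zero (hE : IsCondExp (D : Set A) E) (hφ : IsFaithfulTracialState φ)
    (hcompat : ∀ x : A, φ (E x) = φ x) {p : A} (h : ∀ d ∈ D, φ (p * d) = 0) : E p = 0 := by
  have hs : star (E p) ∈ D := star_mem (hE.2.1 p)
  apply hφ.faithful
  rw [hφ.tracial, ← hE.map_mul_right (one_mem D) p hs, hcompat, h _ hs]

/-- A word in `X°` and `D°` ending in `X°` stays alternating after a further letter from `D°`, so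
`φ` vanishes on all its right multiples by elements of `D`. -/
theorem AltWord.condExp_eq_zero (hE : IsCondExp (D : Set A) E) (hφ : IsFaithfulTracialState φ)
    (hcompat : ∀ x : A, φ (E x) = φ x)
    (hXD : ∀ s a, AltWord (kerLetters φ ![(X : Set A), (D : Set A)]) s a → φ a = 0)
    {p : A} (hp : AltWord (kerLetters φ ![(X : Set A), (D : Set A)]) 0 p) : E p = 0 := by
  refine _root_.condExp_eq_zero hE hφ hcompat fun d hd => ?_
  have h0 : d - φ d • (1 : A) ∈ kerLetters φ ![(X : Set A), (D : Set A)] 1 :=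
    ⟨sub_mem hd (D.smul_mem (one_mem D) _), by simp [hφ.unital]⟩
  have h1 := hXD _ _ (hp.snoc (by decide) h0)
  simpa [mul_sub, hXD _ _ hp] using h1

theorem AltWord.mem_adjoin {s : Fin 2} {p : A}
    (hp : AltWord (kerLetters φ ![(X : Set A), (D : Set A)]) s p) :
    p ∈ Algebra.adjoin ℂ ((X : Set A) ∪ (D : Set A)) := by
  have key : ∀ s, ∀ a ∈ kerLetters φ ![(X : Set A), (D : Set A)] s,
      a ∈ Algebra.adjoin ℂ ((X : Set A) ∪ (D : Set A)) := by
    intro s a ha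
    apply Algebra.subset_adjoin
    fin_cases s
    · exact Or.inl ha.1
    · exact Or.inr ha.1
  induction hp with
  | single ha => exact key _ _ ha
  | snoc _ _ ha ih => exact mul_mem ih (key _ _ ha)

theorem Expanded.map_eq_zero (hE : IsCondExp (D : Set A) E) (hφ : IsFaithfulTracialState φ)
    (hcompat : ∀ x : A, φ (E x) = φ x)
    (hXB : ∀ s a, AltWord (centered (D : Set A) E ![(X : Set A), (B : Set A)]) s a → E a = 0)
    (hXD : ∀ s a, AltWord (kerLetters φ ![(X : Set A), (D : Set A)]) s a → φ a = 0)
    {s : Fin 2} {v : A}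
    (hv : Expanded (kerLetters φ ![(X : Set A), (D : Set A)])
      (centered (D : Set A) E ![(X : Set A), (B : Set A)]) s v) : φ v = 0 := by
  have hX {u q : A} (hu : AltWord (centered (D : Set A) E ![(X : Set A), (B : Set A)]) 1 u)
      (hq : AltWord (kerLetters φ ![(X : Set A), (D : Set A)]) 0 q) : E (u * q) = 0 :=
    hXB 0 _ (hu.snoc (by decide) ⟨hq.mem_adjoin, hq.condExp_eq_zero hE hφ hcompat hXD⟩)
  obtain hv | ⟨u, r, hu, hr, rfl⟩ | ⟨-, hv⟩ := hv
  · exact hXD _ _ hv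
  · rw [← hcompat]
    -- A final letter from `D` comes out of `E`; what precedes it is an amalgamated word, because
    -- a word in `X°` and `D°` ending in `X°` counts as a single `E`-centered letter.
    suffices h : E (u * r) = 0 by rw [h, map_zero]
    match s, hr with
    | 0, hr => exact hX hu hr
    | 1, .single ha => rw [hE.map_mul_right (one_mem D) u ha.1, hXB _ _ hu, zero_mul]
    | 1, .snoc (s := 0) (u := q) hq _ ha =>
      rw [← mul_assoc, hE.map_mul_right (one_mem D) _ ha.1, hX hu hq, zero_mul]
    | 1, .snoc (s := 1) _ h _ => exact absurd rfl h
  · rw [← hcompat, hXB _ _ hv, map_zero]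

/-- The splitting `b = E b + (b - E b)` of a `φ`-centered element of `B` into a `φ`-centered
element of `D` and an `E`-centered letter. -/
theorem split_letter (hE : IsCondExp (D : Set A) E) (hcompat : ∀ x : A, φ (E x) = φ x)
    {b : A} (hb : b ∈ B) (hb0 : φ b = 0) :
    E b ∈ kerLetters φ ![(X : Set A), (D : Set A)] 1 ∧
      b - E b ∈ centered (D : Set A) E ![(X : Set A), (B : Set A)] 1 := by
  refine ⟨⟨hE.2.1 b, by rw [hcompat, hb0]⟩, ?_, ?_⟩
  · exact sub_mem (Algebra.subset_adjoin (Or.inl hb)) (Algebra.subset_adjoin (Or.inr (hE.2.1 b)))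
  · rw [map_sub, hE.map_self (one_mem D) (hE.2.1 b), sub_self]

/-- Induction on the last letter: a letter from `X°` or the part `E b` of a letter `b ∈ B°` extends
the scalar word at the end, while `b - E b` absorbs that scalar word, which then ends in `X°`, into
the amalgamated word. -/
theorem AltWord.mem_span_expanded (hE : IsCondExp (D : Set A) E)
    (hφ : IsFaithfulTracialState φ) (hcompat : ∀ x : A, φ (E x) = φ x)
    (hXD : ∀ s a, AltWord (kerLetters φ ![(X : Set A), (D : Set A)]) s a → φ a = 0)
    {s : Fin 2} {v : A} (hv : AltWord (kerLetters φ ![(X : Set A), (B : Set A)]) s v) :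
    v ∈ Submodule.span ℂ {w | Expanded (kerLetters φ ![(X : Set A), (D : Set A)])
      (centered (D : Set A) E ![(X : Set A), (B : Set A)]) s w} := by
  induction hv with
  | @single s a ha =>
    match s, ha with
    | 0, ha => exact Submodule.subset_span (Or.inl (.single ha))
    | 1, ha =>
      obtain ⟨hd, hb⟩ := split_letter (X := X) hE hcompat ha.1 ha.2
      rw [← add_sub_cancel (E a) a]
      exact add_mem (Submodule.subset_span (Or.inl (.single hd)))
        (Submodule.subset_span (Or.inr (Or.inr ⟨rfl, .single hb⟩)))
  | @snoc s t u a hu hst ha ih =>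
    -- The word `u` stands in for any element of the span, hence its own shape is forgotten.
    clear hu
    induction ih using Submodule.span_induction with
    | zero => simp
    | add x y _ _ hx hy => rw [add_mul]; exact add_mem hx hy
    | smul c x _ hx => rw [smul_mul_assoc]; exact Submodule.smul_mem _ c hx
    | mem w hw =>
      match s, t, hst, ha, hw with
      | 0, 0, hst, _, _ => exact absurd rfl hst
      | 1, 1, hst, _, _ => exact absurd rfl hst
      | 1, 0, hst, ha, hw =>
        apply Submodule.subset_span
        obtain hw | ⟨u, r, hu, hr, rfl⟩ | ⟨-, hw⟩ := hw
        · exact Or.inl (hw.snoc hst ha)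
        · exact Or.inr (Or.inl ⟨u, r * a, hu, hr.snoc hst ha, mul_assoc _ _ _⟩)
        · exact Or.inr (Or.inl ⟨w, a, hw, .single ha, rfl⟩)
      | 0, 1, hst, ha, hw =>
        obtain ⟨hd, hb⟩ := split_letter (X := X) hE hcompat ha.1 ha.2
        rw [← add_sub_cancel (E a) a, mul_add]
        obtain hw | ⟨u, r, hu, hr, rfl⟩ | ⟨h, -⟩ := hw
        · have hwK : w ∈ centered (D : Set A) E ![(X : Set A), (B : Set A)] 0 :=
            ⟨hw.mem_adjoin, hw.condExp_eq_zero hE hφ hcompat hXD⟩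
          exact add_mem (Submodule.subset_span (Or.inl (hw.snoc hst hd)))
            (Submodule.subset_span (Or.inr (Or.inr ⟨rfl, (AltWord.single hwK).snoc hst hb⟩)))
        · have hrK : r ∈ centered (D : Set A) E ![(X : Set A), (B : Set A)] 0 :=
            ⟨hr.mem_adjoin, hr.condExp_eq_zero hE hφ hcompat hXD⟩
          exact add_mem
            (Submodule.subset_span
              (Or.inr (Or.inl ⟨u, r * E a, hu, hr.snoc hst hd, mul_assoc _ _ _⟩)))
            (Submodule.subset_span
              (Or.inr (Or.inr ⟨rfl, (hu.snoc (by decide) hrK).snoc hst hb⟩)))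
        · exact absurd h (by decide)

end FreeProof

/-- (Shlyakhtenko) If the unital subalgebras `X` and `B` are free with
amalgamation over `D` and `X` and `D` are free with respect to `φ`, then `X` and `B` are
free with respect to `φ`. -/
theorem free_of_free_with_amalgamation
    {A : Type*} [Ring A] [Algebra ℂ A] [StarRing A] [StarModule ℂ A]
    (D : StarSubalgebra ℂ A) (E : A →ₗ[ℂ] A) (hE : IsCondExp (D : Set A) E)
    (φ : A →ₗ[ℂ] ℂ) (hφ : IsFaithfulTracialState φ)
    (hcompat : ∀ x : A, φ (E x) = φ x)
    (X B : Subalgebra ℂ A)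
    (hamalg : FreeAmalg (D : Set A) E ![(X : Set A), (B : Set A)])
    (hXD : FreeScalar φ ![(X : Set A), (D : Set A)]) :
    FreeScalar φ ![(X : Set A), (B : Set A)] := by
  have hXB := freeAmalg_iff_altWord.1 hamalg
  have hXD' := (freeScalar_iff_altWord (Y := D.toSubalgebra) hφ.unital).1 hXD
  refine (freeScalar_iff_altWord hφ.unital).2 fun s v hv => ?_
  have hspan := hv.mem_span_expanded hE hφ hcompat hXD'
  refine (Submodule.span_le (p := LinearMap.ker φ)).2 (fun w hw => ?_) hspan
  exact Expanded.map_eq_zero hE hφ hcompat hXB hXD' hw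
end
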